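/- arXiv:0801.1674 — 4 statements merged into one kernel-verified Lean document; each statement's English description precedes it below -/
import Mathlib

section
/- Let u : ℝ → ℝ → ℝ (first argument time t, second argument space x) be smooth (ContDiff of order ∞ jointly in both variables). Suppose that for all t and x, ∂u/∂t = ∂²u/∂x² − u·(∂u/∂x). Then for all t and x, ∂²u/∂t² = ∂⁴u/∂x⁴ − 2u·(∂³u/∂x³) + (u² − 4·∂u/∂x)·(∂²u/∂x²) + 2u·(∂u/∂x)². -/
/-!
Differentiating `u_t = u_xx - u u_x` in time and exchanging the order of differentiation gives
`u_tt = (u_t)_xx - u_t u_x - u (u_t)_x`, the linearised Burgers operator applied to `u_t`.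
Substituting `u_t = u_xx - u u_x` once more leaves only spatial derivatives.
-/

open Filter Topology Function

section PartialDerivatives

variable {𝕜 E F : Type*} [NontriviallyNormedField 𝕜]
  [NormedAddCommGroup E] [NormedSpace 𝕜 E] [NormedAddCommGroup F] [NormedSpace 𝕜 F]

theorem contDiffAt_uncurry_deriv_snd {u : E → 𝕜 → F} {t : E} {x : 𝕜} {m n : WithTop ℕ∞}
    (hu : ContDiffAt 𝕜 n (uncurry u) (t, x)) (hmn : m + 1 ≤ n) :
    ContDiffAt 𝕜 m (uncurry fun s y => deriv (u s) y) (t, x) := by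
  have hparam : ContDiffAt 𝕜 n (uncurry fun (p : E × 𝕜) y => u p.1 y) ((t, x), x) :=
    hu.comp ((t, x), x) (contDiffAt_fst.fst.prodMk contDiffAt_snd)
  exact (hparam.fderiv contDiffAt_snd hmn).clm_apply contDiffAt_const

theorem contDiffAt_uncurry_deriv_fst {u : 𝕜 → E → F} {t : 𝕜} {x : E} {m n : WithTop ℕ∞}
    (hu : ContDiffAt 𝕜 n (uncurry u) (t, x)) (hmn : m + 1 ≤ n) :
    ContDiffAt 𝕜 m (uncurry fun s y => deriv (fun r => u r y) s) (t, x) := by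
  have hswap : ContDiffAt 𝕜 n (uncurry fun y s => u s y) (x, t) :=
    hu.comp (x, t) (contDiffAt_snd.prodMk contDiffAt_fst)
  exact (contDiffAt_uncurry_deriv_snd hswap hmn).comp (t, x) (contDiffAt_snd.prodMk contDiffAt_fst)

theorem hasDerivAt_fst_of_uncurry {u : 𝕜 → E → F} {t : 𝕜} {x : E}
    (hu : DifferentiableAt 𝕜 (uncurry u) (t, x)) :
    HasDerivAt (fun s => u s x) (fderiv 𝕜 (uncurry u) (t, x) (1, 0)) t :=
  hu.hasFDerivAt.comp_hasDerivAt (f := fun s => (s, x)) t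
    ((hasDerivAt_id t).prodMk (hasDerivAt_const t x))

theorem hasDerivAt_snd_of_uncurry {u : E → 𝕜 → F} {t : E} {x : 𝕜}
    (hu : DifferentiableAt 𝕜 (uncurry u) (t, x)) :
    HasDerivAt (u t) (fderiv 𝕜 (uncurry u) (t, x) (0, 1)) x :=
  hu.hasFDerivAt.comp_hasDerivAt x ((hasDerivAt_const x t).prodMk (hasDerivAt_id x))

end PartialDerivatives

section MixedDerivatives

variable {𝕜 F : Type*} [RCLike 𝕜] [NormedAddCommGroup F] [NormedSpace 𝕜 F]

theorem deriv_deriv_comm {u : 𝕜 → 𝕜 → F} {t x : 𝕜}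
    (hu : ContDiffAt 𝕜 2 (uncurry u) (t, x)) :
    deriv (fun s => deriv (u s) x) t = deriv (fun y => deriv (fun s => u s y) t) x := by
  have hdiff : ∀ᶠ p in 𝓝 (t, x), DifferentiableAt 𝕜 (uncurry u) p :=
    (hu.eventually (by simp)).mono fun p hp => hp.differentiableAt (by simp)
  have hfderiv : DifferentiableAt 𝕜 (fderiv 𝕜 (uncurry u)) (t, x) :=
    (hu.fderiv_right (m := 1) (by norm_num)).differentiableAt (by simp)
  have hsnd : (fun s => deriv (u s) x) =ᶠ[𝓝 t] fun s => fderiv 𝕜 (uncurry u) (s, x) (0, 1) :=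
    hdiff.curry_nhds.mono fun _ h => (hasDerivAt_snd_of_uncurry h.self_of_nhds).deriv
  have hfst : (fun y => deriv (fun s => u s y) t) =ᶠ[𝓝 x]
      fun y => fderiv 𝕜 (uncurry u) (t, y) (1, 0) :=
    hdiff.curry_nhds.self_of_nhds.mono fun _ h => (hasDerivAt_fst_of_uncurry h).deriv
  have hfst_snd : HasDerivAt (fun s => fderiv 𝕜 (uncurry u) (s, x) (0, 1))
      (fderiv 𝕜 (fderiv 𝕜 (uncurry u)) (t, x) (1, 0) (0, 1)) t := by
    simpa using! (hasDerivAt_fst_of_uncurry (u := curry (fderiv 𝕜 (uncurry u)))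
      hfderiv).clm_apply (hasDerivAt_const t (0, 1))
  have hsnd_fst : HasDerivAt (fun y => fderiv 𝕜 (uncurry u) (t, y) (1, 0))
      (fderiv 𝕜 (fderiv 𝕜 (uncurry u)) (t, x) (0, 1) (1, 0)) x := by
    simpa using! (hasDerivAt_snd_of_uncurry (u := curry (fderiv 𝕜 (uncurry u)))
      hfderiv).clm_apply (hasDerivAt_const x (1, 0))
  have hsymm : IsSymmSndFDerivAt 𝕜 (uncurry u) (t, x) := hu.isSymmSndFDerivAt (by simp)
  rw [hsnd.deriv_eq, hfst.deriv_eq, hfst_snd.deriv, hsnd_fst.deriv, hsymm]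

theorem deriv_iteratedDeriv_comm {u : 𝕜 → 𝕜 → F} {t x : 𝕜} (n : ℕ)
    (hu : ContDiffAt 𝕜 (n + 1) (uncurry u) (t, x)) :
    deriv (fun s => iteratedDeriv n (u s) x) t =
      iteratedDeriv n (fun y => deriv (fun s => u s y) t) x := by
  induction n generalizing u with
  | zero => simp only [iteratedDeriv_zero]
  | succ n ih =>
    have hcomm : (fun y => deriv (fun s => deriv (u s) y) t) =ᶠ[𝓝 x]
        deriv fun y => deriv (fun s => u s y) t := by
      have hnear : ∀ᶠ p in 𝓝 (t, x), ContDiffAt 𝕜 2 (uncurry u) p :=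
        (hu.of_le (by norm_cast; lia)).eventually (by simp)
      exact hnear.curry_nhds.self_of_nhds.mono fun _ h => deriv_deriv_comm h
    simp only [iteratedDeriv_succ']
    rw [ih (contDiffAt_uncurry_deriv_snd hu (by norm_cast)), hcomm.iteratedDeriv_eq]

end MixedDerivatives

section Burgers

/-- The right-hand side `f_xx - f f_x` of the viscous Burgers equation with unit viscosity: a
solution `u` satisfies `∂ₜ u t = burgersOperator (u t)`, where `u t` is the spatial profile
at time `t`. -/
noncomputable def burgersOperator {𝕜 A : Type*} [NontriviallyNormedField 𝕜] [NormedCommRing A]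
    [NormedAlgebra 𝕜 A] (f : 𝕜 → A) (x : 𝕜) : A :=
  iteratedDeriv 2 f x - f x * deriv f x

section Spatial

variable {𝕜 A : Type*} [NontriviallyNormedField 𝕜] [NormedCommRing A] [NormedAlgebra 𝕜 A]
  {f : 𝕜 → A} {x : 𝕜}

theorem deriv_burgersOperator (hf : DifferentiableAt 𝕜 f x) (hf₁ : DifferentiableAt 𝕜 (deriv f) x)
    (hf₂ : DifferentiableAt 𝕜 (iteratedDeriv 2 f) x) :
    deriv (burgersOperator f) x =
      iteratedDeriv 3 f x - (deriv f x ^ 2 + f x * iteratedDeriv 2 f x) := by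
  have hderiv : HasDerivAt (burgersOperator f)
      (deriv (iteratedDeriv 2 f) x - (deriv f x * deriv f x + f x * deriv (deriv f) x)) x :=
    hf₂.hasDerivAt.sub (hf.hasDerivAt.mul hf₁.hasDerivAt)
  rw [hderiv.deriv, sq, iteratedDeriv_succ (n := 2), iteratedDeriv_succ (n := 1),
    iteratedDeriv_one]

theorem iteratedDeriv_two_burgersOperator (hf : ContDiffAt 𝕜 2 f x)
    (hf₁ : ContDiffAt 𝕜 2 (deriv f) x) (hf₂ : ContDiffAt 𝕜 2 (iteratedDeriv 2 f) x) :
    iteratedDeriv 2 (burgersOperator f) x =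
      iteratedDeriv 4 f x - (3 * deriv f x * iteratedDeriv 2 f x + f x * iteratedDeriv 3 f x) := by
  have hderiv : ∀ k, iteratedDeriv k (deriv f) = iteratedDeriv (k + 1) f :=
    fun _ => iteratedDeriv_succ'.symm
  have hderiv₂ : iteratedDeriv 2 (iteratedDeriv 2 f) = iteratedDeriv 4 f := by
    simp only [iteratedDeriv_eq_iterate, ← iterate_add_apply]
  have hleibniz : iteratedDeriv 2 (f * deriv f) x =
      3 * deriv f x * iteratedDeriv 2 f x + f x * iteratedDeriv 3 f x := by
    rw [iteratedDeriv_mul hf hf₁]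
    simp only [hderiv, Finset.sum_range_succ, Finset.range_zero, Finset.sum_empty,
      Nat.choose_zero_right, Nat.choose_succ_self_right, Nat.choose_self, Nat.cast_one,
      Nat.cast_ofNat, Nat.reduceAdd, Nat.add_one_sub_one, tsub_zero, tsub_self, zero_add,
      iteratedDeriv_zero, iteratedDeriv_one]
    ring
  rw [← hleibniz, ← hderiv₂]
  exact iteratedDeriv_sub hf₂ (hf.mul hf₁)

end Spatial

variable {𝕜 A : Type*} [RCLike 𝕜] [NormedCommRing A] [NormedAlgebra 𝕜 A]
  {u : 𝕜 → 𝕜 → A} {t x : 𝕜}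

theorem deriv_burgersOperator_param (hu : ContDiffAt 𝕜 3 (uncurry u) (t, x)) :
    deriv (fun s => burgersOperator (u s) x) t =
      iteratedDeriv 2 (fun y => deriv (fun s => u s y) t) x -
        (deriv (fun s => u s x) t * deriv (u t) x +
          u t x * deriv (fun y => deriv (fun s => u s y) t) x) := by
  have hu₁ := contDiffAt_uncurry_deriv_snd (m := 2) hu (by norm_num)
  have hu₂ := contDiffAt_uncurry_deriv_snd (m := 1) hu₁ (by norm_num)
  have hdiff := (hasDerivAt_fst_of_uncurry (hu.differentiableAt (by simp))).differentiableAt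
  have hdiff₁ := (hasDerivAt_fst_of_uncurry (hu₁.differentiableAt (by simp))).differentiableAt
  have hdiff₂ : DifferentiableAt 𝕜 (fun s => iteratedDeriv 2 (u s) x) t := by
    simp only [iteratedDeriv_succ, iteratedDeriv_zero]
    exact (hasDerivAt_fst_of_uncurry (hu₂.differentiableAt (by simp))).differentiableAt
  rw [← deriv_iteratedDeriv_comm 2 (by exact_mod_cast hu),
    ← deriv_deriv_comm (hu.of_le (by norm_num))]
  exact (hdiff₂.hasDerivAt.sub (hdiff.hasDerivAt.mul hdiff₁.hasDerivAt)).deriv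

-- The equation itself provides the fourth spatial derivative of a `C³` solution: `u_t`, `u` and
-- `u_x` are `C²`, hence so is `u_xx = u_t + u u_x`.
theorem contDiffAt_iteratedDeriv_two_of_burgers (hu : ContDiffAt 𝕜 3 (uncurry u) (t, x))
    (heq : (fun y => deriv (fun s => u s y) t) =ᶠ[𝓝 x] burgersOperator (u t)) :
    ContDiffAt 𝕜 2 (iteratedDeriv 2 (u t)) x := by
  have hut : ContDiffAt 𝕜 2 (fun y => deriv (fun s => u s y) t) x :=
    (contDiffAt_uncurry_deriv_fst hu (by norm_num)).comp x
      (contDiffAt_const.prodMk contDiffAt_id)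
  have hslice : ContDiffAt 𝕜 3 (u t) x := hu.comp x (contDiffAt_const.prodMk contDiffAt_id)
  have hu₀ : ContDiffAt 𝕜 2 (u t) x := hslice.of_le (by norm_num)
  have hu₁ : ContDiffAt 𝕜 2 (deriv (u t)) x := hslice.derivWithin (by norm_num)
  refine (hut.add (hu₀.mul hu₁)).congr_of_eventuallyEq (heq.mono fun y hy => ?_)
  simp [hy, burgersOperator]

theorem second_time_derivative_burgers_general (hu : ContDiffAt 𝕜 3 (uncurry u) (t, x))
    (heq : ∀ᶠ p in 𝓝 (t, x), deriv (fun s => u s p.2) p.1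
      = iteratedDeriv 2 (u p.1) p.2 - u p.1 p.2 * deriv (u p.1) p.2) :
    iteratedDeriv 2 (fun s => u s x) t
      = iteratedDeriv 4 (u t) x
        - 2 * u t x * iteratedDeriv 3 (u t) x
        + ((u t x) ^ 2 - 4 * deriv (u t) x) * iteratedDeriv 2 (u t) x
        + 2 * u t x * (deriv (u t) x) ^ 2 := by
  have heq_time : deriv (fun s => u s x) =ᶠ[𝓝 t] fun s => burgersOperator (u s) x :=
    heq.curry_nhds.mono fun _ h => h.self_of_nhds
  have heq_space : (fun y => deriv (fun s => u s y) t) =ᶠ[𝓝 x] burgersOperator (u t) :=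
    heq.curry_nhds.self_of_nhds
  have hslice : ContDiffAt 𝕜 3 (u t) x := hu.comp x (contDiffAt_const.prodMk contDiffAt_id)
  have hu₀ : ContDiffAt 𝕜 2 (u t) x := hslice.of_le (by norm_num)
  have hu₁ : ContDiffAt 𝕜 2 (deriv (u t)) x := hslice.derivWithin (by norm_num)
  have hu₂ := contDiffAt_iteratedDeriv_two_of_burgers hu heq_space
  rw [iteratedDeriv_succ, iteratedDeriv_one, heq_time.deriv_eq, deriv_burgersOperator_param hu,
    heq_space.iteratedDeriv_eq, heq_space.deriv_eq, heq_time.self_of_nhds,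
    iteratedDeriv_two_burgersOperator hu₀ hu₁ hu₂,
    deriv_burgersOperator (hu₀.differentiableAt (by simp)) (hu₁.differentiableAt (by simp))
      (hu₂.differentiableAt (by simp))]
  simp only [burgersOperator]
  ring

end Burgers

/-- Equation (8) of the paper: if `u_t = u_xx − u u_x` for a smooth `u`, then
`u_tt = u_xxxx − 2 u u_xxx + (u² − 4 u_x) u_xx + 2 u (u_x)²`. -/
theorem second_time_derivative_burgers
    (u : ℝ → ℝ → ℝ)
    (hu : ContDiff ℝ (⊤ : ℕ∞) fun p : ℝ × ℝ => u p.1 p.2)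
    (heq : ∀ t x, deriv (fun s => u s x) t
      = iteratedDeriv 2 (u t) x - u t x * deriv (u t) x) :
    ∀ t x, iteratedDeriv 2 (fun s => u s x) t
      = iteratedDeriv 4 (u t) x
        - 2 * u t x * iteratedDeriv 3 (u t) x
        + ((u t x) ^ 2 - 4 * deriv (u t) x) * iteratedDeriv 2 (u t) x
        + 2 * u t x * (deriv (u t) x) ^ 2 :=
  fun t x => second_time_derivative_burgers_general (t := t) (x := x)
    (hu.contDiffAt.of_le (WithTop.coe_le_coe.2 le_top)) (.of_forall fun p => heq p.1 p.2)
end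

section
/- Let T_s : ℝ → ℝ be continuous and bounded. Define T(x,t) = (x/(2√π)) ∫₀ᵗ T_s(τ) · (t−τ)^(−3/2) · exp(−x²/(4(t−τ))) dτ for x > 0 and t > 0. Then for every x > 0 and t > 0, T satisfies the heat equation ∂T/∂t (x,t) = ∂²T/∂x² (x,t). -/
open Real Filter Topology

/-- The representation formula (30) of the paper for the solution of the
half-line heat problem: `T(x,t) = (x/(2√π)) ∫₀ᵗ T_s(τ)(t−τ)^(−3/2) exp(−x²/(4(t−τ))) dτ`. -/
noncomputable def heatT (Ts : ℝ → ℝ) (x t : ℝ) : ℝ :=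
  (x / (2 * Real.sqrt π)) *
    ∫ τ in (0:ℝ)..t, Ts τ * (t - τ) ^ (-(3 / 2) : ℝ) * Real.exp (-x ^ 2 / (4 * (t - τ)))

/-!
For `x ≠ 0` the boundary kernel `k(x, s) = x / (2√π) · s^(-3/2) · exp(-x² / (4s))`, extended by
zero to `s ≤ 0`, is smooth and solves the heat equation on all of `{x ≠ 0} × ℝ`, because the
exponential beats every power of `s` as `s → 0⁺`. Hence for `0 ≤ t ≤ N` one may write
`T(x, t) = ∫₀ᴺ k(x, t - τ) T_s(τ) dτ` with limits independent of `t`, and both derivatives can be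
taken under the integral sign.
-/

open MeasureTheory Set

section ParametricIntegral

variable {𝕜 E : Type*} [RCLike 𝕜] [NormedAddCommGroup E] [NormedSpace ℝ E] [NormedSpace 𝕜 E]

theorem hasDerivAt_integral_smul_of_continuousOn {μ : Measure ℝ} {f : ℝ → E} {K K' : 𝕜 → ℝ → 𝕜}
    {U : Set 𝕜} {x₀ : 𝕜} {a b : ℝ} (hf : IntervalIntegrable f μ a b) (hU : U ∈ 𝓝 x₀)
    (hK : ∀ x ∈ U, ContinuousOn (K x) (uIcc a b))
    (hK' : ContinuousOn (Function.uncurry K') (U ×ˢ uIcc a b))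
    (hderiv : ∀ x ∈ U, ∀ τ ∈ uIcc a b, HasDerivAt (K · τ) (K' x τ) x) :
    HasDerivAt (fun x => ∫ τ in a..b, K x τ • f τ ∂μ) (∫ τ in a..b, K' x₀ τ • f τ ∂μ) x₀ := by
  obtain ⟨V, hV, hVU, hVc⟩ := local_compact_nhds hU
  obtain ⟨C, hC⟩ := (hVc.prod isCompact_uIcc).exists_bound_of_continuousOn
    (hK'.mono (prod_mono_left hVU))
  have hx₀ : x₀ ∈ U := mem_of_mem_nhds hU
  have hmeas {k : ℝ → 𝕜} (hk : ContinuousOn k (uIcc a b)) :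
      AEStronglyMeasurable (fun τ => k τ • f τ) (μ.restrict (uIoc a b)) :=
    (hf.continuousOn_smul hk).aestronglyMeasurable_restrict_uIoc
  refine (intervalIntegral.hasDerivAt_integral_of_dominated_loc_of_deriv_le
    (F := fun x τ => K x τ • f τ) (F' := fun x τ => K' x τ • f τ) (bound := fun τ => C * ‖f τ‖)
    hV ?_ (hf.continuousOn_smul (hK x₀ hx₀)) (hmeas (hK'.uncurry_left x₀ hx₀)) ?_
    (hf.norm.const_mul C) ?_).2
  · filter_upwards [hU] with x hx using hmeas (hK x hx)
  · refine .of_forall fun τ hτ x hx => ?_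
    rw [norm_smul]
    gcongr
    exact hC (x, τ) ⟨hx, uIoc_subset_uIcc hτ⟩
  · exact .of_forall fun τ hτ x hx =>
      (hderiv x (hVU hx) τ (uIoc_subset_uIcc hτ)).smul_const (f τ)

end ParametricIntegral

/-- The function `s ↦ s ^ p * exp (-a / s)` on `(0, ∞)`, extended by zero to `s ≤ 0`. All space and
time derivatives of the heat kernel are combinations of these profiles with `a = x ^ 2 / 4`. -/
noncomputable def heatProfile (p a : ℝ) : ℝ → ℝ :=
  (Ioi 0).indicator fun s => s ^ p * exp (-a / s)

section HeatProfile

variable {p a s : ℝ}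

lemma heatProfile_of_nonpos (hs : s ≤ 0) : heatProfile p a s = 0 :=
  indicator_of_notMem (notMem_Ioi.2 hs) _

lemma heatProfile_of_pos (hs : 0 < s) : heatProfile p a s = s ^ p * exp (-a / s) :=
  indicator_of_mem (mem_Ioi.2 hs) _

lemma heatProfile_sub_one (p a s : ℝ) : heatProfile (p - 1) a s = heatProfile p a s / s := by
  rcases le_or_gt s 0 with hs | hs
  · simp [heatProfile_of_nonpos hs]
  · rw [heatProfile_of_pos hs, heatProfile_of_pos hs, rpow_sub_one hs.ne', div_mul_eq_mul_div]

lemma heatProfile_eq_rpow_mul_heatProfile_one (ha : 0 < a) :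
    heatProfile p a s = a ^ p * heatProfile p 1 (s / a) := by
  rcases le_or_gt s 0 with hs | hs
  · simp [heatProfile_of_nonpos hs, heatProfile_of_nonpos (div_nonpos_of_nonpos_of_nonneg hs ha.le)]
  · rw [heatProfile_of_pos hs, heatProfile_of_pos (div_pos hs ha), ← mul_assoc,
      ← mul_rpow ha.le (div_pos hs ha).le, mul_div_cancel₀ s ha.ne', div_div_eq_mul_div,
      neg_one_mul]

lemma tendsto_heatProfile_zero (ha : 0 < a) : Tendsto (heatProfile p a) (𝓝 0) (𝓝 0) := by
  have hright : Tendsto (heatProfile p a) (𝓝[>] 0) (𝓝 0) := by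
    refine ((tendsto_rpow_mul_exp_neg_mul_atTop_nhds_zero (-p) a ha).comp
      tendsto_inv_nhdsGT_zero).congr' ?_
    filter_upwards [self_mem_nhdsWithin] with s hs
    rw [heatProfile_of_pos hs, Function.comp_apply, inv_rpow (le_of_lt hs),
      rpow_neg (le_of_lt hs), inv_inv, div_eq_mul_inv]
  have hleft : Tendsto (heatProfile p a) (𝓝[≤] 0) (𝓝 0) :=
    tendsto_const_nhds.congr' <| by
      filter_upwards [self_mem_nhdsWithin] with s hs using (heatProfile_of_nonpos hs).symm
  simpa only [nhdsLE_sup_nhdsGT] using hleft.sup hright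

lemma hasDerivAt_heatProfile_of_pos (hs : 0 < s) :
    HasDerivAt (heatProfile p a) (p * heatProfile (p - 1) a s + a * heatProfile (p - 2) a s) s := by
  have hpow : HasDerivAt (fun u : ℝ => u ^ p) (p * s ^ (p - 1)) s :=
    hasDerivAt_rpow_const (.inl hs.ne')
  have hdiv : HasDerivAt (fun u : ℝ => -a / u) (a / s ^ 2) s := by
    simpa using (hasDerivAt_const s (-a)).fun_div (hasDerivAt_id s) hs.ne'
  refine ((hpow.mul hdiv.exp).congr_deriv ?_).congr_of_eventuallyEq ?_
  · rw [heatProfile_of_pos hs, heatProfile_of_pos hs, rpow_sub hs p 2, rpow_two]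
    ring
  · filter_upwards [Ioi_mem_nhds hs] with u hu using heatProfile_of_pos hu

lemma hasDerivAt_heatProfile_zero (ha : 0 < a) : HasDerivAt (heatProfile p a) 0 0 := by
  rw [hasDerivAt_iff_tendsto_slope]
  refine ((tendsto_heatProfile_zero (p := p - 1) ha).mono_left nhdsWithin_le_nhds).congr fun u => ?_
  rw [slope_def_field, heatProfile_of_nonpos le_rfl, sub_zero, sub_zero, heatProfile_sub_one]

lemma hasDerivAt_heatProfile_of_neg (hs : s < 0) : HasDerivAt (heatProfile p a) 0 s :=
  (hasDerivAt_const s (0 : ℝ)).congr_of_eventuallyEq <| by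
    filter_upwards [Iio_mem_nhds hs] with u hu using heatProfile_of_nonpos (le_of_lt hu)

lemma hasDerivAt_heatProfile (p : ℝ) (ha : 0 < a) (s : ℝ) :
    HasDerivAt (heatProfile p a) (p * heatProfile (p - 1) a s + a * heatProfile (p - 2) a s) s := by
  rcases lt_trichotomy s 0 with hs | rfl | hs
  · simpa [heatProfile_of_nonpos hs.le] using hasDerivAt_heatProfile_of_neg hs
  · simpa [heatProfile_of_nonpos le_rfl] using hasDerivAt_heatProfile_zero ha
  · exact hasDerivAt_heatProfile_of_pos hs

lemma hasDerivAt_heatProfile_param (p a s : ℝ) :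
    HasDerivAt (heatProfile p · s) (-heatProfile (p - 1) a s) a := by
  rcases le_or_gt s 0 with hs | hs
  · simpa only [heatProfile_of_nonpos hs, neg_zero] using hasDerivAt_const a (0 : ℝ)
  · rw [heatProfile_sub_one]
    simp only [heatProfile_of_pos hs]
    refine (((hasDerivAt_id' a).fun_neg.div_const s).exp.const_mul (s ^ p)).congr_deriv ?_
    ring

lemma hasDerivAt_heatProfile_sq_div_four (p x s : ℝ) :
    HasDerivAt (fun y => heatProfile p (y ^ 2 / 4) s)
      (-(x / 2) * heatProfile (p - 1) (x ^ 2 / 4) s) x := by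
  have hsq : HasDerivAt (fun y : ℝ => y ^ 2 / 4) (x / 2) x :=
    ((hasDerivAt_pow 2 x).div_const 4).congr_deriv (by norm_num; ring)
  refine ((hasDerivAt_heatProfile_param p (x ^ 2 / 4) s).comp x hsq).congr_deriv ?_
  ring

variable {X : Type*} [TopologicalSpace X] {f g : X → ℝ} {S : Set X}

-- The scaling identity reduces joint continuity in `(a, s)` to continuity in `s` alone.
lemma continuousOn_heatProfile (p : ℝ) (hf : ContinuousOn f S) (hg : ContinuousOn g S)
    (hpos : ∀ z ∈ S, 0 < f z) : ContinuousOn (fun z => heatProfile p (f z) (g z)) S := by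
  have hone : Continuous (heatProfile p 1) :=
    continuous_iff_continuousAt.2 fun s => (hasDerivAt_heatProfile p one_pos s).continuousAt
  have hscaled : ContinuousOn (fun z => f z ^ p * heatProfile p 1 (g z / f z)) S :=
    (hf.rpow_const fun z hz => .inl (hpos z hz).ne').mul
      (hone.comp_continuousOn (hg.div hf fun z hz => (hpos z hz).ne'))
  exact hscaled.congr fun z hz => heatProfile_eq_rpow_mul_heatProfile_one (hpos z hz)

lemma continuousOn_heatProfile_sq_div_four (p : ℝ) (hf : ContinuousOn f S) (hg : ContinuousOn g S)
    (hne : ∀ z ∈ S, f z ≠ 0) : ContinuousOn (fun z => heatProfile p (f z ^ 2 / 4) (g z)) S := by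
  refine continuousOn_heatProfile p (by fun_prop) hg fun z hz => ?_
  have := hne z hz
  positivity

end HeatProfile

/-- The kernel sending boundary data to the solution of the half-line heat problem, extended by zero
to times `s ≤ 0`. -/
noncomputable def boundaryKernel (x s : ℝ) : ℝ :=
  x / (2 * √π) * heatProfile (-(3 / 2)) (x ^ 2 / 4) s

/-- The space derivative of `boundaryKernel`, in closed form. -/
noncomputable def boundaryKernelDx (x s : ℝ) : ℝ :=
  1 / (2 * √π) *
    (heatProfile (-(3 / 2)) (x ^ 2 / 4) s - x ^ 2 / 2 * heatProfile (-(5 / 2)) (x ^ 2 / 4) s)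

/-- The common value of the time derivative and the second space derivative of `boundaryKernel`,
in closed form. -/
noncomputable def boundaryKernelDt (x s : ℝ) : ℝ :=
  x / (2 * √π) *
    (-(3 / 2) * heatProfile (-(5 / 2)) (x ^ 2 / 4) s +
      x ^ 2 / 4 * heatProfile (-(7 / 2)) (x ^ 2 / 4) s)

section BoundaryKernel

variable {x : ℝ}

lemma hasDerivAt_boundaryKernel_time (hx : x ≠ 0) (s : ℝ) :
    HasDerivAt (boundaryKernel x) (boundaryKernelDt x s) s := by
  have ha : 0 < x ^ 2 / 4 := by positivity
  refine ((hasDerivAt_heatProfile (-(3 / 2)) ha s).const_mul (x / (2 * √π))).congr_deriv ?_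
  rw [boundaryKernelDt, show (-(3 / 2) - 1 : ℝ) = -(5 / 2) by norm_num,
    show (-(3 / 2) - 2 : ℝ) = -(7 / 2) by norm_num]

lemma hasDerivAt_boundaryKernel_space (x s : ℝ) :
    HasDerivAt (boundaryKernel · s) (boundaryKernelDx x s) x := by
  refine (((hasDerivAt_id' x).div_const (2 * √π)).mul
    (hasDerivAt_heatProfile_sq_div_four (-(3 / 2)) x s)).congr_deriv ?_
  rw [boundaryKernelDx, show (-(3 / 2) - 1 : ℝ) = -(5 / 2) by norm_num]
  ring

lemma hasDerivAt_boundaryKernelDx_space (x s : ℝ) :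
    HasDerivAt (boundaryKernelDx · s) (boundaryKernelDt x s) x := by
  have hsq : HasDerivAt (fun y : ℝ => y ^ 2 / 2) x x :=
    ((hasDerivAt_pow 2 x).div_const 2).congr_deriv (by norm_num)
  refine (((hasDerivAt_heatProfile_sq_div_four (-(3 / 2)) x s).sub
    (hsq.mul (hasDerivAt_heatProfile_sq_div_four (-(5 / 2)) x s))).const_mul
      (1 / (2 * √π))).congr_deriv ?_
  rw [boundaryKernelDt, show (-(3 / 2) - 1 : ℝ) = -(5 / 2) by norm_num,
    show (-(5 / 2) - 1 : ℝ) = -(7 / 2) by norm_num]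
  ring

lemma continuous_boundaryKernel (hx : x ≠ 0) : Continuous (boundaryKernel x) :=
  continuous_iff_continuousAt.2 fun s => (hasDerivAt_boundaryKernel_time hx s).continuousAt

variable {X : Type*} [TopologicalSpace X] {f g : X → ℝ} {S : Set X}

lemma continuousOn_boundaryKernelDx (hf : ContinuousOn f S) (hg : ContinuousOn g S)
    (hne : ∀ z ∈ S, f z ≠ 0) : ContinuousOn (fun z => boundaryKernelDx (f z) (g z)) S := by
  have hprofile (p : ℝ) := continuousOn_heatProfile_sq_div_four p hf hg hne
  unfold boundaryKernelDx
  fun_prop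

lemma continuousOn_boundaryKernelDt (hf : ContinuousOn f S) (hg : ContinuousOn g S)
    (hne : ∀ z ∈ S, f z ≠ 0) : ContinuousOn (fun z => boundaryKernelDt (f z) (g z)) S := by
  have hprofile (p : ℝ) := continuousOn_heatProfile_sq_div_four p hf hg hne
  unfold boundaryKernelDt
  fun_prop

end BoundaryKernel

section HeatT

variable {Ts : ℝ → ℝ} {x t N : ℝ}

lemma boundaryKernel_sub_smul_eq_indicator (Ts : ℝ → ℝ) (x t τ : ℝ) :
    boundaryKernel x (t - τ) • Ts τ = {τ | τ ≤ t}.indicator (fun τ => x / (2 * √π) *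
      (Ts τ * (t - τ) ^ (-(3 / 2) : ℝ) * exp (-x ^ 2 / (4 * (t - τ))))) τ := by
  rw [boundaryKernel, smul_eq_mul]
  rcases lt_trichotomy τ t with h | rfl | h
  · have hexponent : -(x ^ 2 / 4) / (t - τ) = -x ^ 2 / (4 * (t - τ)) := by rw [← neg_div, div_div]
    rw [indicator_of_mem (by simpa using h.le), heatProfile_of_pos (sub_pos.2 h), hexponent]
    ring
  · -- The right-hand side vanishes because `0 ^ (-(3 / 2)) = 0` by convention.
    simp [heatProfile_of_nonpos, zero_rpow]
  · rw [indicator_of_notMem (by simpa using h), heatProfile_of_nonpos (by linarith)]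
    ring

lemma heatT_eq_integral_boundaryKernel (Ts : ℝ → ℝ) (x : ℝ) (ht : 0 ≤ t) (htN : t ≤ N) :
    heatT Ts x t = ∫ τ in 0..N, boundaryKernel x (t - τ) • Ts τ := by
  simp only [boundaryKernel_sub_smul_eq_indicator]
  rw [intervalIntegral.integral_indicator ⟨ht, htN⟩, intervalIntegral.integral_const_mul, heatT]

theorem hasDerivAt_heatT_time (hTs : IntervalIntegrable Ts volume 0 N) (hx : x ≠ 0) (ht : 0 < t)
    (htN : t < N) :
    HasDerivAt (heatT Ts x) (∫ τ in 0..N, boundaryKernelDt x (t - τ) • Ts τ) t := by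
  have hkernel := continuous_boundaryKernel hx
  refine (hasDerivAt_integral_smul_of_continuousOn (K := fun s τ => boundaryKernel x (s - τ))
    (K' := fun s τ => boundaryKernelDt x (s - τ)) hTs univ_mem (fun s _ => by fun_prop)
    (continuousOn_boundaryKernelDt (by fun_prop) (by fun_prop) fun _ _ => hx)
    fun s _ τ _ => (hasDerivAt_boundaryKernel_time hx (s - τ)).comp_sub_const s τ
    ).congr_of_eventuallyEq ?_
  filter_upwards [Icc_mem_nhds ht htN] with s hs
  exact heatT_eq_integral_boundaryKernel Ts x hs.1 hs.2

theorem hasDerivAt_heatT_space (hTs : IntervalIntegrable Ts volume 0 N) (hx : x ≠ 0) (ht : 0 ≤ t)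
    (htN : t ≤ N) :
    HasDerivAt (heatT Ts · t) (∫ τ in 0..N, boundaryKernelDx x (t - τ) • Ts τ) x := by
  simp only [heatT_eq_integral_boundaryKernel Ts _ ht htN]
  refine hasDerivAt_integral_smul_of_continuousOn (K' := fun y τ => boundaryKernelDx y (t - τ))
    hTs (isOpen_ne.mem_nhds hx)
    (fun y hy => (continuous_boundaryKernel hy).comp_continuousOn (by fun_prop))
    (continuousOn_boundaryKernelDx (by fun_prop) (by fun_prop) fun z hz => hz.1)
    fun y _ τ _ => hasDerivAt_boundaryKernel_space y (t - τ)

theorem hasDerivAt_integral_boundaryKernelDx (hTs : IntervalIntegrable Ts volume 0 N)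
    (hx : x ≠ 0) (t : ℝ) :
    HasDerivAt (fun y => ∫ τ in 0..N, boundaryKernelDx y (t - τ) • Ts τ)
      (∫ τ in 0..N, boundaryKernelDt x (t - τ) • Ts τ) x :=
  hasDerivAt_integral_smul_of_continuousOn (K' := fun y τ => boundaryKernelDt y (t - τ))
    hTs (isOpen_ne.mem_nhds hx)
    (fun _ hy => continuousOn_boundaryKernelDx (by fun_prop) (by fun_prop) fun _ _ => hy)
    (continuousOn_boundaryKernelDt (by fun_prop) (by fun_prop) fun z hz => hz.1)
    fun y _ τ _ => hasDerivAt_boundaryKernelDx_space y (t - τ)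

theorem iteratedDeriv_two_heatT_space (hTs : IntervalIntegrable Ts volume 0 N) (hx : x ≠ 0)
    (ht : 0 ≤ t) (htN : t ≤ N) :
    iteratedDeriv 2 (heatT Ts · t) x = ∫ τ in 0..N, boundaryKernelDt x (t - τ) • Ts τ := by
  have hderiv : deriv (heatT Ts · t) =ᶠ[𝓝 x]
      fun y => ∫ τ in 0..N, boundaryKernelDx y (t - τ) • Ts τ := by
    filter_upwards [isOpen_ne.mem_nhds hx] with y hy
    exact (hasDerivAt_heatT_space hTs hy ht htN).deriv
  rw [iteratedDeriv_succ, iteratedDeriv_one, hderiv.deriv_eq]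
  exact (hasDerivAt_integral_boundaryKernelDx hTs hx t).deriv

theorem heatT_satisfies_heat_equation_general (hTs : IntervalIntegrable Ts volume 0 N)
    (hx : x ≠ 0) (ht : 0 < t) (htN : t < N) :
    deriv (fun s => heatT Ts x s) t = iteratedDeriv 2 (fun y => heatT Ts y t) x :=
  (hasDerivAt_heatT_time hTs hx ht htN).deriv.trans
    (iteratedDeriv_two_heatT_space hTs hx ht.le htN.le).symm

end HeatT

/-- For continuous bounded boundary data `T_s`, the representation (30) satisfies the
heat equation `∂T/∂t = ∂²T/∂x²` for all `x > 0`, `t > 0`. -/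
theorem heatT_satisfies_heat_equation
    (Ts : ℝ → ℝ) (hc : Continuous Ts) (hb : ∃ M, ∀ τ, |Ts τ| ≤ M) :
    ∀ x t : ℝ, 0 < x → 0 < t →
      deriv (fun s => heatT Ts x s) t = iteratedDeriv 2 (fun y => heatT Ts y t) x :=
  fun _ t hx ht => heatT_satisfies_heat_equation_general (hc.intervalIntegrable 0 (t + 1)) hx.ne' ht
    (lt_add_one t)
end

section
/- Let T_s : ℝ → ℝ be continuous and bounded. Define T(x,t) = (x/(2√π)) ∫₀ᵗ T_s(τ) · (t−τ)^(−3/2) · exp(−x²/(4(t−τ))) dτ for x > 0 and t > 0. Then for every t > 0, the limit of T(x,t) as x → 0⁺ equals T_s(t). -/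
open Real Filter Topology

/-!
The kernels `K x s = x / (2√π) · s ^ (-3/2) · exp (-x² / (4s))` form an approximate identity at
`s = 0⁺` as `x → 0⁺`. By the parabolic scaling `x² · K x (x² s) = K 1 s`, the mass of `K x` on
`(0, b)` is that of `K 1` on `(0, b / x²)`, which tends to the total mass of `K 1`; the substitution
`s = u⁻¹` and `Γ(1/2) = √π` show that this total mass is `1`. Away from `s = 0`, the factor `x`
makes the kernels tend to zero uniformly. Hence only the behaviour of `T_s` just before time `t`
matters in the limit.
-/

section BoundaryHeatKernel

open MeasureTheory Set

/-- The Poisson kernel of the heat equation on the half-line `x > 0`: the response at depth `x`,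
a time `s` after a unit impulse of boundary temperature. At `s = 0` it takes the value `0`, by the
conventions for `0 ^ (-3/2)`. -/
noncomputable def boundaryHeatKernel (x s : ℝ) : ℝ :=
  x / (2 * √π) * s ^ (-(3 / 2) : ℝ) * exp (-x ^ 2 / (4 * s))

theorem heatT_eq_integral_boundaryHeatKernel_smul (Ts : ℝ → ℝ) (x t : ℝ) :
    heatT Ts x t = ∫ τ in (0 : ℝ)..t, boundaryHeatKernel x (t - τ) • Ts τ := by
  rw [heatT, ← intervalIntegral.integral_const_mul]
  congr 1 with τ
  simp only [boundaryHeatKernel, smul_eq_mul]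
  ring

@[fun_prop]
theorem measurable_boundaryHeatKernel (x : ℝ) : Measurable (boundaryHeatKernel x) := by
  unfold boundaryHeatKernel
  fun_prop

theorem boundaryHeatKernel_nonneg {x s : ℝ} (hx : 0 ≤ x) (hs : 0 ≤ s) :
    0 ≤ boundaryHeatKernel x s := by
  unfold boundaryHeatKernel
  positivity

theorem sq_mul_boundaryHeatKernel_sq_mul {x s : ℝ} (hx : 0 < x) (hs : 0 ≤ s) :
    x ^ 2 * boundaryHeatKernel x (x ^ 2 * s) = boundaryHeatKernel 1 s := by
  have hpow : (x ^ 2 * s) ^ (-(3 / 2) : ℝ) = (x ^ 3)⁻¹ * s ^ (-(3 / 2) : ℝ) := by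
    rw [mul_rpow (sq_nonneg x) hs, ← rpow_natCast_mul hx.le, ← rpow_natCast, ← rpow_neg hx.le]
    norm_num
  have hexp : -x ^ 2 / (4 * (x ^ 2 * s)) = -1 ^ 2 / (4 * s) := by
    field_simp
  rw [boundaryHeatKernel, boundaryHeatKernel, hpow, hexp]
  field_simp

theorem integral_rpow_mul_exp_neg_div_Ioi {a b : ℝ} (ha : 0 < a) (hb : 0 < b) :
    ∫ s in Ioi (0 : ℝ), s ^ (-a - 1) * exp (-(b / s)) = (1 / b) ^ a * Gamma a := by
  have hsubst : ∀ u ∈ Ioi (0 : ℝ),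
      (|(-1 : ℝ)| * u ^ ((-1 : ℝ) - 1)) •
        ((u ^ (-1 : ℝ)) ^ (-a - 1) * exp (-(b / u ^ (-1 : ℝ)))) =
      u ^ (a - 1) * exp (-(b * u)) := by
    intro u (hu : 0 < u)
    have hpow : u ^ ((-1 : ℝ) - 1) * (u ^ (-1 : ℝ)) ^ (-a - 1) = u ^ (a - 1) := by
      rw [← rpow_mul hu.le, ← rpow_add hu]
      ring_nf
    rw [abs_neg, abs_one, one_mul, smul_eq_mul, ← mul_assoc, hpow, rpow_neg_one, div_inv_eq_mul]
  rw [← integral_comp_rpow_Ioi _ (neg_ne_zero.mpr one_ne_zero),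
    setIntegral_congr_fun measurableSet_Ioi hsubst, integral_rpow_mul_exp_neg_mul_Ioi ha hb]

theorem integral_boundaryHeatKernel_Ioi {x : ℝ} (hx : 0 < x) :
    ∫ s in Ioi (0 : ℝ), boundaryHeatKernel x s = 1 := by
  have hkernel (s : ℝ) : boundaryHeatKernel x s =
      x / (2 * √π) * (s ^ (-(1 / 2) - 1 : ℝ) * exp (-(x ^ 2 / 4 / s))) := by
    rw [boundaryHeatKernel, mul_assoc]
    ring_nf
  have hscale : (1 / (x ^ 2 / 4)) ^ (1 / 2 : ℝ) = 2 / x := by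
    rw [← sqrt_eq_rpow, show 1 / (x ^ 2 / 4) = (2 / x) ^ 2 by field_simp; norm_num,
      sqrt_sq (by positivity)]
  simp only [hkernel]
  rw [integral_const_mul, integral_rpow_mul_exp_neg_div_Ioi one_half_pos (by positivity), hscale,
    Gamma_one_half_eq]
  field_simp

theorem integrableOn_boundaryHeatKernel_Ioi {x : ℝ} (hx : 0 < x) :
    IntegrableOn (boundaryHeatKernel x) (Ioi 0) :=
  .of_integral_ne_zero (by rw [integral_boundaryHeatKernel_Ioi hx]; exact one_ne_zero)

theorem integral_boundaryHeatKernel_eq_integral_boundaryHeatKernel_one {x b : ℝ} (hx : 0 < x)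
    (hb : 0 ≤ b) :
    ∫ s in (0 : ℝ)..b, boundaryHeatKernel x s =
      ∫ s in (0 : ℝ)..b / x ^ 2, boundaryHeatKernel 1 s :=
  calc ∫ s in (0 : ℝ)..b, boundaryHeatKernel x s
      = ∫ s in (0 : ℝ)..b / x ^ 2, x ^ 2 * boundaryHeatKernel x (x ^ 2 * s) := by
        rw [intervalIntegral.integral_const_mul, intervalIntegral.mul_integral_comp_mul_left,
          mul_zero, mul_div_cancel₀ b (pow_ne_zero 2 hx.ne')]
    _ = ∫ s in (0 : ℝ)..b / x ^ 2, boundaryHeatKernel 1 s := by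
        refine intervalIntegral.integral_congr fun s hs => ?_
        rw [uIcc_of_le (by positivity)] at hs
        exact sq_mul_boundaryHeatKernel_sq_mul hx hs.1

theorem tendsto_integral_boundaryHeatKernel {b : ℝ} (hb : 0 < b) :
    Tendsto (fun x => ∫ s in (0 : ℝ)..b, boundaryHeatKernel x s) (𝓝[>] 0) (𝓝 1) := by
  have hscale : Tendsto (fun x : ℝ => b / x ^ 2) (𝓝[>] 0) atTop := by
    simpa only [div_eq_mul_inv, Function.comp_def, inv_pow] using
      ((tendsto_pow_atTop two_ne_zero).comp tendsto_inv_nhdsGT_zero).const_mul_atTop hb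
  have hmass := intervalIntegral_tendsto_integral_Ioi 0
    (integrableOn_boundaryHeatKernel_Ioi one_pos) hscale
  rw [integral_boundaryHeatKernel_Ioi one_pos] at hmass
  refine hmass.congr' ?_
  filter_upwards [self_mem_nhdsWithin] with x hx
  exact (integral_boundaryHeatKernel_eq_integral_boundaryHeatKernel_one hx hb.le).symm

theorem abs_boundaryHeatKernel_le (x : ℝ) {δ s : ℝ} (hδ : 0 < δ) (hs : δ ≤ s) :
    |boundaryHeatKernel x s| ≤ |x| / (2 * √π) * δ ^ (-(3 / 2) : ℝ) := by
  have hs₀ : 0 < s := hδ.trans_le hs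
  have hpow : s ^ (-(3 / 2) : ℝ) ≤ δ ^ (-(3 / 2) : ℝ) :=
    rpow_le_rpow_of_nonpos hδ hs (by norm_num)
  have hexp : exp (-x ^ 2 / (4 * s)) ≤ 1 :=
    exp_le_one_iff.mpr (div_nonpos_of_nonpos_of_nonneg (by simp [sq_nonneg]) (by positivity))
  calc |boundaryHeatKernel x s|
      = |x| / (2 * √π) * s ^ (-(3 / 2) : ℝ) * exp (-x ^ 2 / (4 * s)) := by
        rw [boundaryHeatKernel, abs_mul, abs_mul, abs_div, abs_exp,
          abs_of_nonneg (by positivity : 0 ≤ 2 * √π), abs_of_nonneg (rpow_nonneg hs₀.le _)]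
    _ ≤ |x| / (2 * √π) * δ ^ (-(3 / 2) : ℝ) * 1 := by gcongr
    _ = |x| / (2 * √π) * δ ^ (-(3 / 2) : ℝ) := mul_one _

theorem tendstoUniformlyOn_boundaryHeatKernel_Ici {δ : ℝ} (hδ : 0 < δ) :
    TendstoUniformlyOn boundaryHeatKernel 0 (𝓝 0) (Ici δ) := by
  have hbound : Tendsto (fun x : ℝ => |x| / (2 * √π) * δ ^ (-(3 / 2) : ℝ)) (𝓝 0) (𝓝 0) :=
    Continuous.tendsto' (by fun_prop) 0 0 (by simp)
  rw [Metric.tendstoUniformlyOn_iff]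
  intro ε hε
  filter_upwards [hbound.eventually_lt_const hε] with x hx s hs
  rw [dist_comm, Pi.zero_apply, dist_zero_right, norm_eq_abs]
  exact (abs_boundaryHeatKernel_le x hδ hs).trans_lt hx

theorem tendstoUniformlyOn_boundaryHeatKernel_sub {t : ℝ} {u : Set ℝ} (hu : u ∈ 𝓝 t) :
    TendstoUniformlyOn (fun x τ => boundaryHeatKernel x (t - τ)) 0 (𝓝 0) (Iio t \ u) := by
  obtain ⟨δ, hδ, hball⟩ := Metric.mem_nhds_iff.mp hu
  refine ((tendstoUniformlyOn_boundaryHeatKernel_Ici hδ).comp (t - ·)).mono ?_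
  rintro τ ⟨hτt : τ < t, hτu⟩
  have hdist : δ ≤ dist τ t := not_lt.mp fun h => hτu (hball h)
  rwa [dist_comm, Real.dist_eq, abs_of_pos (sub_pos.mpr hτt)] at hdist

theorem tendsto_integral_boundaryHeatKernel_smul {E : Type*} [NormedAddCommGroup E]
    [NormedSpace ℝ E] [CompleteSpace E] {g : ℝ → E} {a t : ℝ} {l : E} (hat : a < t)
    (hint : IntervalIntegrable g volume a t) (hlim : Tendsto g (𝓝[<] t) (𝓝 l)) :
    Tendsto (fun x => ∫ τ in a..t, boundaryHeatKernel x (t - τ) • g τ) (𝓝[>] 0) (𝓝 l) := by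
  have hmass : Tendsto (fun x => ∫ τ in Ioo a t, boundaryHeatKernel x (t - τ)) (𝓝[>] 0) (𝓝 1) := by
    simpa only [← integral_Ioc_eq_integral_Ioo, ← intervalIntegral.integral_of_le hat.le,
      intervalIntegral.integral_comp_sub_left, sub_self] using
      tendsto_integral_boundaryHeatKernel (sub_pos.mpr hat)
  simp only [intervalIntegral.integral_of_le hat.le, integral_Ioc_eq_integral_Ioo]
  refine tendsto_setIntegral_peak_smul_of_integrableOn_of_tendsto (x₀ := t)
    measurableSet_Ioo measurableSet_Ioo subset_rfl self_mem_nhdsWithin measure_Ioo_lt_top.ne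
    ?nonneg ?uniform hmass ?measurable
    ((intervalIntegrable_iff_integrableOn_Ioo_of_le hat.le).mp hint)
    (hlim.mono_left (nhdsWithin_mono t Ioo_subset_Iio_self))
  case nonneg =>
    filter_upwards [self_mem_nhdsWithin] with x hx τ hτ
    exact boundaryHeatKernel_nonneg (le_of_lt hx) (sub_nonneg.mpr hτ.2.le)
  case uniform =>
    intro u hu htu
    have huniform : TendstoUniformlyOn (fun x τ => boundaryHeatKernel x (t - τ)) 0 (𝓝 0)
        (Ioo a t \ u) :=
      (tendstoUniformlyOn_boundaryHeatKernel_sub (hu.mem_nhds htu)).mono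
        (sdiff_subset_sdiff_left Ioo_subset_Iio_self)
    exact fun V hV => (huniform V hV).filter_mono nhdsWithin_le_nhds
  case measurable =>
    exact .of_forall fun x => Measurable.aestronglyMeasurable (by fun_prop)

end BoundaryHeatKernel

theorem heatT_boundary_value_general {Ts : ℝ → ℝ} {t l : ℝ} (ht : 0 < t)
    (hint : IntervalIntegrable Ts MeasureTheory.volume 0 t)
    (hlim : Tendsto Ts (𝓝[<] t) (𝓝 l)) :
    Tendsto (fun x => heatT Ts x t) (𝓝[>] 0) (𝓝 l) := by
  simpa only [heatT_eq_integral_boundaryHeatKernel_smul] using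
    tendsto_integral_boundaryHeatKernel_smul ht hint hlim

/-- For continuous bounded boundary data `T_s` and `t > 0`, the representation (30)
attains the boundary value: `T(x,t) → T_s(t)` as `x → 0⁺`
(assertion after equation (31) of the paper). -/
theorem heatT_boundary_value
    (Ts : ℝ → ℝ) (hc : Continuous Ts) (hb : ∃ M, ∀ τ, |Ts τ| ≤ M) :
    ∀ t : ℝ, 0 < t →
      Tendsto (fun x => heatT Ts x t) (𝓝[>] 0) (𝓝 (Ts t)) := by
  intro t ht
  exact heatT_boundary_value_general ht (hc.intervalIntegrable 0 t) hc.continuousWithinAt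
end

section
/- Let t₀ > 0 and δ > 0, and let T_s : ℝ → ℝ be continuous with T_s(τ) = 0 for all τ ≥ t₀ − δ. Then the function G(t) = ∫₀ᵗ T_s(τ) / √(t−τ) dτ is differentiable at t₀ with G′(t₀) = −(1/2) ∫₀^{t₀} T_s(τ) · (t₀−τ)^(−3/2) dτ. -/
open Real

open MeasureTheory Set Filter Topology

/-!
Since `f` vanishes near `t₀`, the upper limit of `∫ τ in a..t, k (t - τ) • f τ` can be fixed at
some `b < t₀` for all `t` close to `t₀`. The argument `t - τ` then stays in a compact subset of
`(0, ∞)`, where the derivative of `k` is bounded, so differentiation under the integral sign is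
justified by dominated convergence although `k` may be singular at `0`.
-/

section

variable {E : Type*} [NormedAddCommGroup E] [NormedSpace ℝ E]

lemma intervalIntegral_eq_of_eqOn_zero {f : ℝ → E} {μ : Measure ℝ} {a b c : ℝ}
    (hf : EqOn f 0 (uIoc b c)) : ∫ τ in a..c, f τ ∂μ = ∫ τ in a..b, f τ ∂μ := by
  have hbc : IntervalIntegrable f μ b c := IntervalIntegrable.zero.congr hf.symm
  by_cases hab : IntervalIntegrable f μ a b
  · have hbc_zero : ∫ τ in b..c, f τ ∂μ = 0 :=
      intervalIntegral.integral_zero_ae (.of_forall hf)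
    rw [← intervalIntegral.integral_add_adjacent_intervals hab hbc, hbc_zero, add_zero]
  · have hac : ¬ IntervalIntegrable f μ a c := fun h ↦ hab (h.trans hbc.symm)
    rw [intervalIntegral.integral_undef hab, intervalIntegral.integral_undef hac]

variable {f : ℝ → E} {k k' : ℝ → ℝ} {a b t t₀ : ℝ}

lemma intervalIntegrable_comp_sub_smul (hk : ContinuousOn k (Ioi 0))
    (hf : IntervalIntegrable f volume a b) (ht : max a b < t) :
    IntervalIntegrable (fun τ ↦ k (t - τ) • f τ) volume a b :=
  hf.continuousOn_smul <| hk.comp (by fun_prop) fun _ hτ ↦ sub_pos.2 (hτ.2.trans_lt ht)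

lemma exists_mem_nhds_norm_comp_sub_le (hk : ContinuousOn k (Ioi 0)) (ht₀ : max a b < t₀) :
    ∃ s ∈ 𝓝 t₀, ∃ C, ∀ t ∈ s, max a b < t ∧ ∀ τ ∈ uIcc a b, ‖k (t - τ)‖ ≤ C := by
  obtain ⟨s, hs, hs_lt, hs_compact⟩ := local_compact_nhds (Ioi_mem_nhds ht₀)
  have hcont : ContinuousOn (fun p : ℝ × ℝ ↦ k (p.1 - p.2)) (s ×ˢ uIcc a b) :=
    hk.comp (by fun_prop) fun p hp ↦ sub_pos.2 (hp.2.2.trans_lt (hs_lt hp.1))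
  obtain ⟨C, hC⟩ := (hs_compact.prod isCompact_uIcc).exists_bound_of_continuousOn hcont
  exact ⟨s, hs, C, fun t ht ↦ ⟨hs_lt ht, fun τ hτ ↦ hC (t, τ) ⟨ht, hτ⟩⟩⟩

theorem hasDerivAt_integral_comp_sub_smul (hk : ∀ x > 0, HasDerivAt k (k' x) x)
    (hk' : ContinuousOn k' (Ioi 0)) (hf : IntervalIntegrable f volume a b)
    (ht₀ : max a b < t₀) :
    HasDerivAt (fun t ↦ ∫ τ in a..b, k (t - τ) • f τ) (∫ τ in a..b, k' (t₀ - τ) • f τ) t₀ := by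
  have hk_cont : ContinuousOn k (Ioi 0) := fun x hx ↦ (hk x hx).continuousAt.continuousWithinAt
  obtain ⟨s, hs, C, hsC⟩ := exists_mem_nhds_norm_comp_sub_le hk' ht₀
  refine (intervalIntegral.hasDerivAt_integral_of_dominated_loc_of_deriv_le
    (F := fun t τ ↦ k (t - τ) • f τ) (F' := fun t τ ↦ k' (t - τ) • f τ)
    (bound := fun τ ↦ C * ‖f τ‖) hs ?_ (intervalIntegrable_comp_sub_smul hk_cont hf ht₀)
    (intervalIntegrable_comp_sub_smul hk' hf ht₀).def'.aestronglyMeasurable ?_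
    (hf.norm.const_mul C) ?_).2
  · filter_upwards [Ioi_mem_nhds ht₀] with t ht
    exact (intervalIntegrable_comp_sub_smul hk_cont hf ht).def'.aestronglyMeasurable
  · refine .of_forall fun τ hτ t ht ↦ ?_
    rw [norm_smul]
    gcongr
    exact (hsC t ht).2 τ (uIoc_subset_uIcc hτ)
  · refine .of_forall fun τ hτ t ht ↦ HasDerivAt.smul_const ?_ (f τ)
    exact (hk (t - τ) (sub_pos.2 (hτ.2.trans_lt (hsC t ht).1))).comp_sub_const t τ

theorem hasDerivAt_integral_comp_sub_smul_of_eventuallyEq_zero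
    (hk : ∀ x > 0, HasDerivAt k (k' x) x) (hk' : ContinuousOn k' (Ioi 0))
    (hf : IntervalIntegrable f volume a t₀) (hf₀ : f =ᶠ[𝓝 t₀] 0) (ht₀ : a < t₀) :
    HasDerivAt (fun t ↦ ∫ τ in a..t, k (t - τ) • f τ) (∫ τ in a..t₀, k' (t₀ - τ) • f τ) t₀ := by
  obtain ⟨l, u, ht₀_mem, hlu⟩ := mem_nhds_iff_exists_Ioo_subset.1 hf₀
  obtain ⟨b, hb, hbt₀⟩ := exists_between (max_lt ht₀ ht₀_mem.1)
  obtain ⟨hab, hlb⟩ := max_lt_iff.1 hb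
  have integral_eq (κ : ℝ → ℝ) {t : ℝ} (ht : t ∈ Ioo l u) :
      ∫ τ in a..t, κ (t - τ) • f τ = ∫ τ in a..b, κ (t - τ) • f τ := by
    refine intervalIntegral_eq_of_eqOn_zero fun τ hτ ↦ ?_
    have hfτ : f τ = 0 := hlu (ordConnected_Ioo.uIcc_subset ⟨hlb, hbt₀.trans ht₀_mem.2⟩ ht
      (uIoc_subset_uIcc hτ))
    simp [hfτ]
  have hf_ab : IntervalIntegrable f volume a b :=
    hf.mono_set (uIcc_subset_uIcc_left (mem_uIcc_of_le hab.le hbt₀.le))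
  rw [integral_eq k' ht₀_mem]
  refine (hasDerivAt_integral_comp_sub_smul hk hk' hf_ab
    (max_lt ht₀ hbt₀)).congr_of_eventuallyEq ?_
  filter_upwards [Ioo_mem_nhds ht₀_mem.1 ht₀_mem.2] with t ht using integral_eq k ht

lemma hasDerivAt_inv_sqrt {x : ℝ} (hx : 0 < x) :
    HasDerivAt (fun y ↦ (√y)⁻¹) (-(1 / 2) * x ^ (-(3 / 2) : ℝ)) x := by
  have hpow : HasDerivAt (fun y : ℝ ↦ y ^ (-(1 / 2) : ℝ)) (-(1 / 2) * x ^ (-(3 / 2) : ℝ)) x := by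
    convert hasDerivAt_rpow_const (p := -(1 / 2)) (.inl hx.ne') using 3
    norm_num
  refine hpow.congr_of_eventuallyEq ?_
  filter_upwards [Ioi_mem_nhds hx] with y hy
  rw [rpow_neg (le_of_lt hy), sqrt_eq_rpow]

theorem abel_integral_deriv_general (ht₀ : a < t₀) (hf : IntervalIntegrable f volume a t₀)
    (hf₀ : f =ᶠ[𝓝 t₀] 0) :
    HasDerivAt (fun t ↦ ∫ τ in a..t, (√(t - τ))⁻¹ • f τ)
      (-(1 / 2 : ℝ) • ∫ τ in a..t₀, (t₀ - τ) ^ (-(3 / 2) : ℝ) • f τ) t₀ := by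
  have hk' : ContinuousOn (fun x : ℝ ↦ -(1 / 2) * x ^ (-(3 / 2) : ℝ)) (Ioi 0) :=
    continuousOn_const.mul (continuousOn_id.rpow_const fun _ hx ↦ .inl (ne_of_gt hx))
  simpa only [mul_smul, intervalIntegral.integral_smul] using
    hasDerivAt_integral_comp_sub_smul_of_eventuallyEq_zero
      (fun _ hx ↦ hasDerivAt_inv_sqrt hx) hk' hf hf₀ ht₀

end

/-- Equation (33) of the paper: for continuous `T_s` vanishing on `[t₀ − δ, ∞)`,
the Abel-type integral `G(t) = ∫₀ᵗ T_s(τ)/√(t−τ) dτ` is differentiable at `t₀` with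
`G′(t₀) = −(1/2) ∫₀^{t₀} T_s(τ)(t₀−τ)^(−3/2) dτ`. -/
theorem abel_integral_deriv
    (t₀ δ : ℝ) (ht₀ : 0 < t₀) (hδ : 0 < δ)
    (Ts : ℝ → ℝ) (hc : Continuous Ts)
    (hvanish : ∀ τ : ℝ, t₀ - δ ≤ τ → Ts τ = 0)
    (G : ℝ → ℝ)
    (hG : ∀ t : ℝ, G t = ∫ τ in (0:ℝ)..t, Ts τ / Real.sqrt (t - τ)) :
    HasDerivAt G
      (-(1 / 2) * ∫ τ in (0:ℝ)..t₀, Ts τ * (t₀ - τ) ^ (-(3 / 2) : ℝ)) t₀ := by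
  have hTs₀ : Ts =ᶠ[𝓝 t₀] 0 := by
    filter_upwards [Ioi_mem_nhds (sub_lt_self t₀ hδ)] with τ hτ using hvanish τ (le_of_lt hτ)
  simpa only [funext hG, div_eq_inv_mul, mul_comm (Ts _), smul_eq_mul] using
    abel_integral_deriv_general ht₀ (hc.intervalIntegrable 0 t₀) hTs₀
end
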